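/- Let p be an odd prime, let (G, H, T) be a faithful RCC loop folder of order 2p with ⟨T⟩ = G, and let K be a subgroup of G with H ≤ K ≤ G, |G : K| = 2 and |K : H| = p. Set T₁ := T ∩ K, K₁ := ⟨T₁⟩ and H₁ := H ∩ K₁, and assume there exists s ∈ T with s ∉ K that does not commute with all elements of K₁. If H₁ ≠ 1, then H is a normal subgroup of K. -/

import Mathlib

/-- A loop folder `(G, H, T)`: `T` contains `1` and is a transversal for the right cosets
of every conjugate `H^g = g⁻¹Hg` of `H` in `G` (note `H^g x = H^g t ↔ g*(x*t⁻¹)*g⁻¹ ∈ H`). -/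
def IsLoopFolder {G : Type*} [Group G] (H : Subgroup G) (T : Set G) : Prop :=
  (1 : G) ∈ T ∧ ∀ g x : G, ∃! t, t ∈ T ∧ g * (x * t⁻¹) * g⁻¹ ∈ H

/-- The loop folder is right conjugacy closed: `T` is invariant under conjugation by `G`. -/
def IsRCC {G : Type*} [Group G] (T : Set G) : Prop :=
  ∀ t ∈ T, ∀ g : G, g⁻¹ * t * g ∈ T

/-- The loop folder is faithful: the core `⋂_{g ∈ G} g⁻¹Hg` of `H` in `G` is trivial. -/
def IsFaithfulFolder {G : Type*} [Group G] (H : Subgroup G) : Prop :=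
  ∀ x : G, (∀ g : G, g * x * g⁻¹ ∈ H) → x = 1

/-!
Write `K₁ = ⟨T ∩ K⟩`, `H₁ = H ∩ K₁` and `p = |K : H|`. The group `G` permutes the `p - 1`
nontrivial elements of `T ∩ K`, so the centralizer of `K₁` has index prime to `p`; it normalizes
`H₁`, as does `H`, whence `H₁` is normal in `K`. Now `K₁ / H₁` has order `p`, and a normal subgroup
of `G` inside `H` is trivial, so `K₁` is elementary abelian.

For `s ∈ T` outside `K` the same triviality gives `H₁ ∩ H₁ˢ = 1`, so `H₁ ≠ 1` acts by conjugation
transitively on the `p` elements of `T \ K`. Hence every element of `K₁` is a product of an element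
of `H₁` and one that commutes with `s`, which forces `s²` to centralize `K₁`. Finally
`G = K₁⟨s⟩`, so `K = K₁⟨s²⟩` is abelian.
-/

section

open Subgroup

variable {G : Type*} [Group G] {A C H K L M N : Subgroup G} {S T U : Set G} {s x : G}

theorem IsRCC.conj_mem_iff (hS : IsRCC S) (g t : G) : g * t * g⁻¹ ∈ S ↔ t ∈ S :=
  ⟨fun h => by simpa [mul_assoc] using hS _ h g, fun h => by simpa using hS t h g⁻¹⟩

theorem isRCC_coe (N : Subgroup G) [hN : N.Normal] : IsRCC (N : Set G) :=
  fun t ht g => by simpa using hN.conj_mem t ht g⁻¹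

theorem IsRCC.inter (hS : IsRCC S) (hU : IsRCC U) : IsRCC (S ∩ U) :=
  fun t ht g => ⟨hS t ht.1 g, hU t ht.2 g⟩

theorem IsRCC.compl (hS : IsRCC S) : IsRCC Sᶜ := fun t ht g h =>
  ht <| by simpa using (hS.conj_mem_iff g⁻¹ t).1 (by simpa using h)

theorem IsRCC.closure_normal (hS : IsRCC S) : (closure S).Normal := by
  have htop : normalizer S = ⊤ :=
    eq_top_iff.2 fun g _ => mem_set_normalizer_iff.2 fun t => (hS.conj_mem_iff g t).symm
  exact normalizer_eq_top_iff.1 (top_le_iff.1 (htop ▸ normalizer_le_normalizer_closure S))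

/-- The conjugation action of `G` on a conjugation-invariant set. -/
def IsRCC.conjPerm (hS : IsRCC S) : G →* Equiv.Perm S where
  toFun g := (MulAut.conj g).toEquiv.subtypeEquiv fun t => (hS.conj_mem_iff g t).symm
  map_one' := by ext; simp
  map_mul' g h := by ext; simp [mul_assoc]

theorem IsRCC.ker_conjPerm (hS : IsRCC S) : hS.conjPerm.ker = centralizer S := by
  ext g
  simp [IsRCC.conjPerm, MonoidHom.mem_ker, mem_centralizer_iff, Equiv.ext_iff, Subtype.ext_iff,
    mul_inv_eq_iff_eq_mul, eq_comm (a := g * _)]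

open Nat in
theorem IsRCC.index_centralizer_dvd_factorial (hS : IsRCC S) (hfin : S.Finite) :
    (centralizer S).index ∣ S.ncard ! := by
  have := hfin.to_subtype
  rw [← hS.ker_conjPerm, index_ker, ← Nat.card_coe_set_eq, ← Nat.card_perm]
  exact card_subgroup_dvd_card _

theorem centralizer_diff_singleton_one (S : Set G) :
    centralizer (S \ {1}) = centralizer S := by
  ext g
  simp only [mem_centralizer_iff]
  refine ⟨fun h t ht => ?_, fun h t ht => h t ht.1⟩
  by_cases ht1 : t = 1
  · simp [ht1]
  · exact h t ⟨ht, ht1⟩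

theorem IsRCC.not_dvd_index_centralizer (hS : IsRCC S) (hone : (1 : G) ∈ S)
    (hp : S.ncard.Prime) : ¬ S.ncard ∣ (centralizer S).index := by
  have hfin : S.Finite := Set.finite_of_ncard_ne_zero hp.ne_zero
  have hdiff : IsRCC (S \ {1}) := hS.inter (isRCC_coe (⊥ : Subgroup G)).compl
  rw [← centralizer_diff_singleton_one]
  intro hdvd
  have hle := hp.dvd_factorial.1
    (hdvd.trans (hdiff.index_centralizer_dvd_factorial hfin.sdiff))
  exact hle.not_gt (Set.ncard_sdiff_singleton_lt_of_mem hone hfin)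

theorem le_of_le_of_not_dvd_index [C.Normal] (hp : (H.relIndex K).Prime) (hHM : H ≤ M)
    (hCM : C ≤ M) (hC : ¬ H.relIndex K ∣ C.index) : K ≤ M := by
  refine relIndex_eq_one.1 (((Nat.dvd_prime hp).1 (relIndex_dvd_of_le_left K hHM)).resolve_right ?_)
  intro h
  exact hC (h ▸ (relIndex_dvd_of_le_left K hCM).trans (relIndex_dvd_index_of_normal C K))

theorem le_normalizer_inf_of_normal (H A : Subgroup G) [A.Normal] :
    H ≤ normalizer ((H ⊓ A : Subgroup G) : Set G) :=
  (le_inf le_normalizer (by simp [normalizer_eq_top])).trans inf_normalizer_le_normalizer_inf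

theorem commutator_le_of_prime_relIndex (hA : A ≤ normalizer ((H ⊓ A : Subgroup G) : Set G))
    (hp : (H.relIndex A).Prime) : ⁅A, A⁆ ≤ H := by
  have : (H.subgroupOf A).Normal := normal_subgroupOf_iff_le_normalizer_inf.2 hA
  have := Fact.mk hp
  have : IsCyclic (A ⧸ H.subgroupOf A) := isCyclic_of_prime_card (p := H.relIndex A) rfl
  have : IsMulCommutative (A ⧸ H.subgroupOf A) := inferInstance
  rw [← map_subtype_commutator, map_le_iff_le_comap]
  exact (Normal.quotient_commutative_iff_commutator_le (N := H.subgroupOf A)).1 this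

theorem pow_relIndex_mem_of_le_normalizer (hA : A ≤ normalizer ((H ⊓ A : Subgroup G) : Set G))
    (hx : x ∈ A) : x ^ H.relIndex A ∈ H := by
  have : (H.subgroupOf A).Normal := normal_subgroupOf_iff_le_normalizer_inf.2 hA
  exact (H.subgroupOf A).pow_index_mem ⟨x, hx⟩

theorem exists_conj_eq_of_ncard_le (hS : S.Finite)
    (hcard : S.ncard ≤ Nat.card N) (hN : ∀ u ∈ N, Commute u s → u = 1)
    (hmem : ∀ u ∈ N, u * s * u⁻¹ ∈ S) {t : G} (ht : t ∈ S) : ∃ u ∈ N, u * s * u⁻¹ = t := by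
  have hinj : Set.InjOn (fun u => u * s * u⁻¹) N := by
    intro u hu v hv (huv : u * s * u⁻¹ = v * s * v⁻¹)
    refine (inv_mul_eq_one.1 (hN (v⁻¹ * u) (N.mul_mem (N.inv_mem hv) hu) ?_)).symm
    calc v⁻¹ * u * s = v⁻¹ * (u * s * u⁻¹) * u := by group
      _ = v⁻¹ * (v * s * v⁻¹) * u := by rw [huv]
      _ = s * (v⁻¹ * u) := by group
  have himage : (fun u => u * s * u⁻¹) '' N = S := by
    refine Set.eq_of_subset_of_ncard_le (Set.image_subset_iff.2 hmem) ?_ hS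
    rw [hinj.ncard_image]
    exact hcard
  rwa [← himage] at ht

theorem IsRCC.exists_conj_eq (hS : IsRCC S) (hp : S.ncard.Prime) (hs : s ∈ S)
    (hN : ∀ u ∈ N, Commute u s → u = 1) (hx : x ∈ N) (hx1 : x ≠ 1) (hxp : x ^ S.ncard = 1)
    {t : G} (ht : t ∈ S) : ∃ u ∈ N, u * s * u⁻¹ = t := by
  have := Fact.mk hp
  have hcard : S.ncard ≤ Nat.card (zpowers x) := by
    rw [Nat.card_zpowers, orderOf_eq_prime hxp hx1]
  have hxN : zpowers x ≤ N := zpowers_le.2 hx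
  obtain ⟨u, hu, hut⟩ := exists_conj_eq_of_ncard_le (Set.finite_of_ncard_ne_zero hp.ne_zero) hcard
    (fun u hu => hN u (hxN hu)) (fun u _ => (hS.conj_mem_iff u s).2 hs) ht
  exact ⟨u, hxN hu, hut⟩

theorem conj_sq_eq_of_exists_conj [A.Normal] [IsMulCommutative A] (hNA : N ≤ A)
    (hsN : s ^ 2 ∈ normalizer (N : Set G)) (hdisj : ∀ u ∈ N, s * u * s⁻¹ ∈ N → u = 1)
    (horb : ∀ x ∈ A, ∃ u ∈ N, u * s * u⁻¹ = x * s * x⁻¹) {u : G} (hu : u ∈ N) :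
    s ^ 2 * u * (s ^ 2)⁻¹ = u := by
  set v := s * u * s⁻¹ with hv
  set w := s ^ 2 * u * (s ^ 2)⁻¹ with hw
  have hvA : v ∈ A := ‹A.Normal›.conj_mem u (hNA hu) s
  have hwN : w ∈ N := (mem_normalizer_iff.1 hsN u).1 hu
  obtain ⟨n, hn, hnv⟩ := horb v hvA
  -- Compare the components of `n⁻¹ * v` and of its conjugate by `s` in `N` and `s * N * s⁻¹`.
  have hfix : s * (n⁻¹ * v) * s⁻¹ = n⁻¹ * v := by
    calc s * (n⁻¹ * v) * s⁻¹ = n⁻¹ * (n * s * n⁻¹) * v * s⁻¹ := by group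
      _ = n⁻¹ * v := by rw [hnv]; group
  have hconj : s * (n⁻¹ * u⁻¹) * s⁻¹ = n⁻¹ * w⁻¹ := by
    calc s * (n⁻¹ * u⁻¹) * s⁻¹ = s * (n⁻¹ * v) * s⁻¹ * (w⁻¹ * v⁻¹) := by
          rw [hv, hw]; group
      _ = n⁻¹ * (v * w⁻¹ * v⁻¹) := by rw [hfix]; group
      _ = n⁻¹ * w⁻¹ := by
          rw [setLike_mul_comm hvA (A.inv_mem (hNA hwN)), mul_inv_cancel_right]
  have hnu : n⁻¹ * u⁻¹ = 1 := hdisj _ (N.mul_mem (N.inv_mem hn) (N.inv_mem hu))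
    (hconj ▸ N.mul_mem (N.inv_mem hn) (N.inv_mem hwN))
  rw [hnu, mul_one, mul_inv_cancel] at hconj
  exact inv_injective (mul_left_cancel (hconj.symm.trans hnu.symm))

theorem sq_mem_centralizer_of_exists_conj [A.Normal] [IsMulCommutative A] (hNA : N ≤ A)
    (hsN : s ^ 2 ∈ normalizer (N : Set G)) (hdisj : ∀ u ∈ N, s * u * s⁻¹ ∈ N → u = 1)
    (horb : ∀ x ∈ A, ∃ u ∈ N, u * s * u⁻¹ = x * s * x⁻¹) :
    s ^ 2 ∈ centralizer (A : Set G) := by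
  intro x hx
  obtain ⟨u, hu, hux⟩ := horb x hx
  have hfix : Commute (u⁻¹ * x) s := by
    calc u⁻¹ * x * s = u⁻¹ * (x * s * x⁻¹) * x := by group
      _ = s * (u⁻¹ * x) := by rw [← hux]; group
  have hu2 : Commute u (s ^ 2) := .symm <|
    mul_inv_eq_iff_eq_mul.1 (conj_sq_eq_of_exists_conj hNA hsN hdisj horb hu)
  simpa using (hu2.mul_left (hfix.pow_right 2)).eq

theorem sq_mem_center_of_sup_zpowers_eq_top (htop : A ⊔ zpowers s = ⊤)
    (hs : s ^ 2 ∈ centralizer (A : Set G)) : s ^ 2 ∈ center G := by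
  have hle : A ⊔ zpowers s ≤ centralizer {s ^ 2} :=
    sup_le (fun a ha => mem_centralizer_singleton_iff.2 (hs a ha))
      (zpowers_le.2 (mem_centralizer_singleton_iff.2 (Commute.self_pow s 2)))
  exact mem_center_iff.2 fun g => mem_centralizer_singleton_iff.1 (hle (htop ▸ mem_top g))

theorem le_sup_center_of_index_two [A.Normal] (hAK : A ≤ K) (hK : K.index = 2) (hsK : s ∉ K)
    (htop : A ⊔ zpowers s = ⊤) (hs : s ^ 2 ∈ center G) : K ≤ A ⊔ center G := by
  intro g hg
  obtain ⟨a, ha, -, ⟨n, rfl⟩, rfl⟩ := mem_sup_of_normal_left.1 (htop ▸ mem_top g)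
  have hsn : s ^ n ∈ K := (K.mul_mem_cancel_left (hAK ha)).1 hg
  obtain ⟨m, rfl | rfl⟩ := n.even_or_odd'
  · refine mul_mem_sup ha ?_
    simpa [zpow_mul] using (center G).zpow_mem hs m
  · have hsm : s ^ (2 * m) ∈ K := by simpa [zpow_mul] using K.zpow_mem (sq_mem_of_index_two hK s) m
    rw [zpow_add, zpow_one, K.mul_mem_cancel_left hsm] at hsn
    exact absurd hsn hsK

theorem isMulCommutative_sup_center (A : Subgroup G) [IsMulCommutative A] :
    IsMulCommutative ↥(A ⊔ center G) := by
  have hA : A ⊔ center G ≤ centralizer (A : Set G) :=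
    sup_le A.le_centralizer (center_le_centralizer _)
  exact le_centralizer_iff_isMulCommutative.1
    (sup_le (le_centralizer_iff.1 hA) (center_le_centralizer _))

theorem isMulCommutative_of_exists_conj [A.Normal] [IsMulCommutative A] (hAK : A ≤ K)
    (hK : K.index = 2) (hsK : s ∉ K) (htop : A ⊔ zpowers s = ⊤) (hNA : N ≤ A)
    (hKN : K ≤ normalizer (N : Set G)) (hdisj : ∀ u ∈ N, s * u * s⁻¹ ∈ N → u = 1)
    (horb : ∀ x ∈ A, ∃ u ∈ N, u * s * u⁻¹ = x * s * x⁻¹) : IsMulCommutative K := by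
  have hsq : s ^ 2 ∈ centralizer (A : Set G) :=
    sq_mem_centralizer_of_exists_conj hNA (hKN (sq_mem_of_index_two hK s)) hdisj horb
  have hle : K ≤ A ⊔ center G := le_sup_center_of_index_two hAK hK hsK htop
    (sq_mem_center_of_sup_zpowers_eq_top htop hsq)
  have := isMulCommutative_sup_center A
  exact le_centralizer_iff_isMulCommutative.1 <|
    hle.trans ((A ⊔ center G).le_centralizer.trans (centralizer_le hle))

theorem closure_le_sup_zpowers (hT : ∀ t ∈ T, t ∈ A ∨ ∃ u ∈ A, u * s * u⁻¹ = t) :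
    closure T ≤ A ⊔ zpowers s := by
  refine (closure_le _).2 fun t ht => ?_
  obtain htA | ⟨u, hu, rfl⟩ := hT t ht
  · exact mem_sup_left htA
  · have hu' : u ∈ A ⊔ zpowers s := mem_sup_left hu
    exact mul_mem (mul_mem hu' (mem_sup_right (mem_zpowers s))) (inv_mem hu')

theorem IsLoopFolder.existsUnique_mul_inv_mem (hT : IsLoopFolder H T) (x : G) :
    ∃! t, t ∈ T ∧ x * t⁻¹ ∈ H := by
  simpa using hT.2 1 x

theorem IsLoopFolder.isComplement (hT : IsLoopFolder H T) : IsComplement (H : Set G) T := by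
  refine isComplement_iff_existsUnique_mul_inv_mem.2 fun x => ?_
  obtain ⟨t, ⟨ht, hxt⟩, huniq⟩ := hT.existsUnique_mul_inv_mem x
  exact ⟨⟨t, ht⟩, hxt, fun u hu => Subtype.ext (huniq u ⟨u.2, hu⟩)⟩

theorem IsLoopFolder.isComplement_subgroupOf (hT : IsLoopFolder H T) (hHK : H ≤ K) (hLK : L ≤ K)
    (hTL : T ∩ K ⊆ L) : IsComplement (H.subgroupOf L : Set L) (Subtype.val ⁻¹' T) := by
  refine isComplement_iff_existsUnique_mul_inv_mem.2 fun x => ?_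
  obtain ⟨t, ⟨ht, hxt⟩, huniq⟩ := hT.existsUnique_mul_inv_mem (x : G)
  have htK : t ∈ K := by simpa using (K.mul_mem_cancel_left (hLK x.2)).1 (hHK hxt)
  exact ⟨⟨⟨t, hTL ⟨ht, htK⟩⟩, ht⟩, hxt,
    fun u hu => Subtype.ext (Subtype.ext (huniq u ⟨u.2, hu⟩))⟩

theorem IsLoopFolder.ncard_inter (hT : IsLoopFolder H T) (hHK : H ≤ K) (hLK : L ≤ K)
    (hTL : T ∩ K ⊆ L) : (T ∩ K).ncard = H.relIndex L := by
  have hinter : T ∩ K = T ∩ L :=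
    Set.Subset.antisymm (fun t ht => ⟨ht.1, hTL ht⟩) (Set.inter_subset_inter_right T hLK)
  rw [hinter, relIndex, ← (hT.isComplement_subgroupOf hHK hLK hTL).ncard_right,
    ← Set.ncard_image_of_injective _ Subtype.val_injective, Set.image_preimage_eq_inter_range,
    Subtype.range_coe]

theorem IsLoopFolder.ncard_sdiff (hT : IsLoopFolder H T) (hHK : H ≤ K) (hK : K.index = 2)
    (h0 : H.relIndex K ≠ 0) : (T \ K).ncard = H.relIndex K := by
  have hcard : T.ncard = H.relIndex K * 2 := by
    rw [hT.isComplement.ncard_right, ← relIndex_mul_index hHK, hK]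
  have hfin : T.Finite := Set.finite_of_ncard_ne_zero (by omega)
  have hinter := hT.ncard_inter hHK le_rfl Set.inter_subset_right
  have hsum := Set.ncard_inter_add_ncard_sdiff_eq_ncard T (K : Set G) hfin
  omega

theorem IsFaithfulFolder.eq_bot_of_normal_le (hH : IsFaithfulFolder H) [N.Normal] (hNH : N ≤ H) :
    N = ⊥ :=
  (eq_bot_iff_forall N).2 fun x hx => hH x fun g => hNH (‹N.Normal›.conj_mem x hx g)

theorem IsFaithfulFolder.isMulCommutative (hH : IsFaithfulFolder H) [A.Normal]
    (hA : A ≤ normalizer ((H ⊓ A : Subgroup G) : Set G)) (hp : (H.relIndex A).Prime) :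
    IsMulCommutative A :=
  le_centralizer_iff_isMulCommutative.1 <| commutator_eq_bot_iff_le_centralizer.1 <|
    hH.eq_bot_of_normal_le (commutator_le_of_prime_relIndex hA hp)

theorem IsFaithfulFolder.pow_relIndex_eq_one (hH : IsFaithfulFolder H) [A.Normal]
    (hA : A ≤ normalizer ((H ⊓ A : Subgroup G) : Set G)) (hx : x ∈ A) :
    x ^ H.relIndex A = 1 := by
  refine hH _ fun g => ?_
  rw [← conj_pow]
  exact pow_relIndex_mem_of_le_normalizer hA (‹A.Normal›.conj_mem x hx g)

theorem IsFaithfulFolder.eq_one_of_conj_mem (hH : IsFaithfulFolder H) (hNH : N ≤ H)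
    (hKN : K ≤ normalizer (N : Set G)) (hK : K.index = 2) (hsK : s ∉ K) {u : G} (hu : u ∈ N)
    (hsu : s * u * s⁻¹ ∈ N) : u = 1 := by
  refine hH u fun g => hNH ?_
  by_cases hg : g ∈ K
  · exact (mem_normalizer_iff.1 (hKN hg) u).1 hu
  · have hgs : g * s⁻¹ ∈ K := by simp [mul_mem_iff_of_index_two hK, hg, hsK]
    simpa [mul_assoc] using (mem_normalizer_iff.1 (hKN hgs) _).1 hsu

theorem IsLoopFolder.le_normalizer_inf_closure (hT : IsLoopFolder H T) (hRCC : IsRCC T)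
    (hHK : H ≤ K) [K.Normal] (hp : (H.relIndex K).Prime) :
    K ≤ normalizer ((H ⊓ closure (T ∩ K) : Subgroup G) : Set G) := by
  have hRCC₁ : IsRCC (T ∩ K) := hRCC.inter (isRCC_coe K)
  have := hRCC₁.closure_normal
  have hcard : (T ∩ K).ncard = H.relIndex K := hT.ncard_inter hHK le_rfl Set.inter_subset_right
  have hindex : ¬ H.relIndex K ∣ (centralizer (closure (T ∩ K) : Set G)).index := by
    rw [centralizer_closure, ← hcard]
    exact hRCC₁.not_dvd_index_centralizer ⟨hT.1, K.one_mem⟩ (hcard ▸ hp)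
  exact le_of_le_of_not_dvd_index hp (le_normalizer_inf_of_normal H _)
    ((centralizer_le (inf_le_right (a := H))).trans (centralizer_le_normalizer _)) hindex

theorem IsLoopFolder.relIndex_closure (hT : IsLoopFolder H T) (hHK : H ≤ K) :
    H.relIndex (closure (T ∩ K)) = H.relIndex K :=
  (hT.ncard_inter hHK ((closure_le K).2 Set.inter_subset_right) subset_closure).symm.trans
    (hT.ncard_inter hHK le_rfl Set.inter_subset_right)

theorem stmt_17_general (hLF : IsLoopFolder H T) (hRCC : IsRCC T) (hFaith : IsFaithfulFolder H)
    (hgen : closure T = ⊤) (hHK : H ≤ K) (hGK : K.index = 2) (hp : (H.relIndex K).Prime)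
    (hH₁ : H ⊓ closure (T ∩ K) ≠ ⊥) : IsMulCommutative K := by
  have := normal_of_index_eq_two hGK
  have := (hRCC.inter (isRCC_coe K)).closure_normal
  have hRCC₂ : IsRCC (T \ K) := hRCC.inter (isRCC_coe K).compl
  have hcard₂ : (T \ K).ncard = H.relIndex K := hLF.ncard_sdiff hHK hGK hp.ne_zero
  have hKN := hLF.le_normalizer_inf_closure hRCC hHK hp
  have hK₁K : closure (T ∩ K) ≤ K := (closure_le K).2 Set.inter_subset_right
  have hTK₁ : T ∩ K ⊆ closure (T ∩ K) := subset_closure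
  have hrel := hLF.relIndex_closure hHK
  set K₁ := closure (T ∩ K)
  have := hFaith.isMulCommutative (hK₁K.trans hKN) (hrel ▸ hp)
  obtain ⟨s, hs⟩ : (T \ K).Nonempty := Set.nonempty_of_ncard_ne_zero (hcard₂ ▸ hp.ne_zero)
  have hdisj : ∀ u ∈ H ⊓ K₁, s * u * s⁻¹ ∈ H ⊓ K₁ → u = 1 := fun u hu =>
    hFaith.eq_one_of_conj_mem inf_le_left hKN hGK hs.2 hu
  obtain ⟨x, hx, hx1⟩ := (bot_or_exists_ne_one (H ⊓ K₁)).resolve_left hH₁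
  have horb : ∀ t ∈ T \ K, ∃ u ∈ H ⊓ K₁, u * s * u⁻¹ = t := fun t ht =>
    hRCC₂.exists_conj_eq (hcard₂ ▸ hp) hs
      (fun u hu hus => hdisj u hu (by rwa [← hus.eq, mul_inv_cancel_right])) hx hx1
      (hcard₂ ▸ hrel ▸ hFaith.pow_relIndex_eq_one (hK₁K.trans hKN) hx.2) ht
  have htop : K₁ ⊔ zpowers s = ⊤ := top_le_iff.1 <| hgen ▸ closure_le_sup_zpowers fun t ht =>
    (em (t ∈ K)).imp (fun htK => hTK₁ ⟨ht, htK⟩)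
      fun htK => (horb t ⟨ht, htK⟩).imp fun _ hu => ⟨hu.1.2, hu.2⟩
  exact isMulCommutative_of_exists_conj hK₁K hGK hs.2 htop inf_le_right hKN hdisj
    fun y _ => horb _ ((hRCC₂.conj_mem_iff y s).2 hs)

end

/-- Case 2, special case: if some `s ∈ T \\ K` does not centralize `K₁ := ⟨T ∩ K⟩` and
`H₁ = H ⊓ K₁ ≠ 1`, then `H` is normal in `K`. -/
theorem stmt_17 {G : Type*} [Group G] [Finite G] (p : ℕ) (hp : p.Prime) (hodd : Odd p)
    (H K : Subgroup G) (T : Set G)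
    (hLF : IsLoopFolder H T) (hRCC : IsRCC T) (hFaith : IsFaithfulFolder H)
    (hord : Nat.card T = 2 * p) (hgen : Subgroup.closure T = ⊤)
    (hHK : H ≤ K) (hGK : K.index = 2) (hKH : H.relIndex K = p)
    (s : G) (hs : s ∈ T) (hsK : s ∉ K)
    (hsnc : ¬ ∀ x ∈ Subgroup.closure (T ∩ (K : Set G)), s * x = x * s)
    (hH1 : H ⊓ Subgroup.closure (T ∩ (K : Set G)) ≠ ⊥) :
    ∀ k ∈ K, ∀ x ∈ H, k⁻¹ * x * k ∈ H := by
  have := stmt_17_general hLF hRCC hFaith hgen hHK hGK (hKH.symm ▸ hp) hH1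
  intro k hk x hx
  rwa [mul_assoc, setLike_mul_comm (hHK hx) hk, inv_mul_cancel_left]
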